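/- For all 0 < s < t < T and every bounded Borel measurable function f : ℝ^ν → ℝ one has the ℝ^ν-valued identity E[f(b_t)(B_t − B_s)] = −E[ f(b_t) ∫_s^t ( (x − b_u)/u + (y − b_u)/(T−u) ) du ]; here (x−z)/u + (y−z)/(T−u) = ∇_z ln d_u(z) with d_u(z) := p_u(x,z) p_{T−u}(z,y)/p_T(x,y). -/

import Mathlib

open MeasureTheory ProbabilityTheory

/-- A `ν`-dimensional Brownian motion `B` on a filtered probability space
`(Ω, m, (ℱ_t), P)` satisfying the usual conditions: the filtration is complete and
right-continuous, `B` has continuous paths on `[0,∞)` with `B_0 = 0`, `B` is adapted, and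
for `0 ≤ s ≤ t` the increment `B_t − B_s` is independent of `ℱ_s` and is a centered
Gaussian vector with covariance matrix `(t−s)·Id` (componentwise iid `N(0, t−s)`). -/
structure IsBrownianMotion {Ω : Type*} [m : MeasurableSpace Ω] (P : Measure Ω) (ν : ℕ)
    (F : Filtration ℝ m) (B : ℝ → Ω → Fin ν → ℝ) : Prop where
  complete : ∀ (t : ℝ) (A : Set Ω), P A = 0 → MeasurableSet[F t] A
  rightCont : ∀ t : ℝ, (F t : MeasurableSpace Ω) = ⨅ s ∈ Set.Ioi t, (F s : MeasurableSpace Ω)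
  contPaths : ∀ ω : Ω, ContinuousOn (fun t => B t ω) (Set.Ici 0)
  start : ∀ ω : Ω, B 0 ω = 0
  adapted : ∀ t : ℝ, Measurable[F t] (B t)
  indepIncr : ∀ s t : ℝ, 0 ≤ s → s ≤ t →
    Indep (MeasurableSpace.comap (fun ω => B t ω - B s ω) inferInstance) (F s) P
  gaussIncr : ∀ s t : ℝ, 0 ≤ s → s ≤ t →
    Measure.map (fun ω => B t ω - B s ω) P =
      Measure.pi fun _ : Fin ν => gaussianReal 0 (Real.toNNReal (t - s))

/-- The Brownian bridge from `q` to `y` in time `T` driven by the path `B`: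
`b_t = (t/T)y + ((T−t)/T)q + B_t − (T−t)∫₀ᵗ (T−s)⁻² B_s ds` for `t < T`, and `b_t = y`
otherwise (in particular `b_T = y`). -/
noncomputable def bridgeBB (ν : ℕ) (T : ℝ) (q y : Fin ν → ℝ) (B : ℝ → Fin ν → ℝ)
    (t : ℝ) : Fin ν → ℝ :=
  if t < T then
    (t / T) • y + ((T - t) / T) • q + B t -
      (T - t) • ∫ s in (0 : ℝ)..t, ((T - s) ^ 2)⁻¹ • B s
  else y

noncomputable def martBB {ν : ℕ} (T : ℝ) (w : ℝ → Fin ν → ℝ) (u : ℝ) : Fin ν → ℝ :=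
  (T - u)⁻¹ • w u - ∫ r in (0 : ℝ)..u, ((T - r) ^ 2)⁻¹ • w r

section Det

variable {ν : ℕ} {T : ℝ} {w : ℝ → Fin ν → ℝ}

lemma contOn_sq_inv {t : ℝ} (htT : t < T) :
    ContinuousOn (fun r => ((T - r) ^ 2)⁻¹) (Set.Icc 0 t) := by
  apply ContinuousOn.inv₀ (by fun_prop)
  intro r hr
  have : 0 < T - r := by linarith [hr.2]
  positivity

lemma contOn_weight (hw : ContinuousOn w (Set.Ici 0)) {t : ℝ} (htT : t < T) :
    ContinuousOn (fun r => ((T - r) ^ 2)⁻¹ • w r) (Set.Icc 0 t) :=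
  (contOn_sq_inv htT).smul (hw.mono (fun _ hr => hr.1))

lemma ii_weight (hw : ContinuousOn w (Set.Ici 0)) {a b : ℝ} (ha : 0 ≤ a) (hab : a ≤ b)
    (hb : b < T) :
    IntervalIntegrable (fun r => ((T - r) ^ 2)⁻¹ • w r) volume a b := by
  apply ContinuousOn.intervalIntegrable
  rw [Set.uIcc_of_le hab]
  exact (contOn_weight hw hb).mono (Set.Icc_subset_Icc ha le_rfl)

lemma ii_sq_inv {a b : ℝ} (ha : 0 ≤ a) (hab : a ≤ b) (hb : b < T) :
    IntervalIntegrable (fun r => ((T - r) ^ 2)⁻¹) volume a b := by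
  apply ContinuousOn.intervalIntegrable
  rw [Set.uIcc_of_le hab]
  exact (contOn_sq_inv hb).mono (Set.Icc_subset_Icc ha le_rfl)

lemma hasDeriv_h {r : ℝ} (hr : r < T) :
    HasDerivAt (fun r => (T - r)⁻¹) (((T - r) ^ 2)⁻¹) r := by
  have h1 : HasDerivAt (fun r => T - r) (-1) r := by
    simpa using (hasDerivAt_id r).const_sub T
  have h2 := h1.fun_inv (by linarith)
  simpa using h2

lemma integral_h {a b : ℝ} (ha : 0 ≤ a) (hab : a ≤ b) (hb : b < T) :
    ∫ r in a..b, ((T - r) ^ 2)⁻¹ = (T - b)⁻¹ - (T - a)⁻¹ := by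
  apply intervalIntegral.integral_eq_sub_of_hasDerivAt
  · intro r hr
    rw [Set.uIcc_of_le hab] at hr
    exact hasDeriv_h (by linarith [hr.2])
  · exact ii_sq_inv ha hab hb

lemma mart_diff (hw : ContinuousOn w (Set.Ici 0)) {a b : ℝ} (ha : 0 ≤ a) (hab : a ≤ b)
    (hb : b < T) :
    martBB T w b - martBB T w a = (T - a)⁻¹ • (w b - w a) +
      ∫ r in a..b, ((T - r) ^ 2)⁻¹ • (w b - w r) := by
  have h1 : ∫ r in a..b, ((T - r) ^ 2)⁻¹ • (w b - w r) =
      ((T - b)⁻¹ - (T - a)⁻¹) • w b - ∫ r in a..b, ((T - r) ^ 2)⁻¹ • w r := by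
    simp_rw [smul_sub]
    rw [intervalIntegral.integral_sub _ (ii_weight hw ha hab hb),
      intervalIntegral.integral_smul_const, integral_h ha hab hb]
    apply ContinuousOn.intervalIntegrable
    rw [Set.uIcc_of_le hab]
    exact ((contOn_sq_inv hb).mono (Set.Icc_subset_Icc ha le_rfl)).fun_smul continuousOn_const
  rw [h1, ← intervalIntegral.integral_interval_sub_left (ii_weight hw le_rfl (ha.trans hab) hb)
    (ii_weight hw le_rfl ha (hab.trans_lt hb))]
  simp only [martBB]
  module

lemma sqrt_bound {a b t : ℝ} (hab : a ≤ b) (hbt : b ≤ t) (htT : t < T) :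
    |(T - a)⁻¹ - √((T - a)⁻¹ * (T - b)⁻¹)| ≤ (b - a) * ((T - t) ^ 2)⁻¹ := by
  have h0 : 0 < T - t := by linarith
  have h1 : 0 < T - b := by linarith
  have h2 : 0 < T - a := by linarith
  have hle : (T - a)⁻¹ ≤ (T - b)⁻¹ := by gcongr
  have hA : (T - a)⁻¹ ≤ √((T - a)⁻¹ * (T - b)⁻¹) := by
    apply Real.le_sqrt_of_sq_le
    rw [sq]; gcongr
  have hB : √((T - a)⁻¹ * (T - b)⁻¹) ≤ (T - b)⁻¹ := by
    apply Real.sqrt_le_iff.2 ⟨by positivity, _⟩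
    rw [sq]; gcongr
  rw [abs_sub_comm, abs_of_nonneg (by linarith)]
  have h3 : (T - b)⁻¹ - (T - a)⁻¹ = (b - a) * ((T - b)⁻¹ * (T - a)⁻¹) := by
    field_simp; ring
  have h4 : (T - b)⁻¹ * (T - a)⁻¹ ≤ ((T - t) ^ 2)⁻¹ := by
    rw [sq, mul_inv]; gcongr; linarith
  calc _ ≤ (T - b)⁻¹ - (T - a)⁻¹ := by linarith
    _ ≤ _ := by rw [h3]; gcongr

lemma mart_err (hw : ContinuousOn w (Set.Ici 0)) {a b t ε : ℝ} (ha : 0 ≤ a) (hab : a ≤ b)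
    (hbt : b ≤ t) (htT : t < T) (hε : ∀ r ∈ Set.Icc a b, ‖w b - w r‖ ≤ ε) :
    ‖martBB T w b - martBB T w a - √((T - a)⁻¹ * (T - b)⁻¹) • (w b - w a)‖ ≤
      2 * ((T - t) ^ 2)⁻¹ * (b - a) * ε := by
  rw [mart_diff hw ha hab (hbt.trans_lt htT)]
  have e : ∀ I : Fin ν → ℝ, (T - a)⁻¹ • (w b - w a) + I - √((T - a)⁻¹ * (T - b)⁻¹) • (w b - w a) =
      ((T - a)⁻¹ - √((T - a)⁻¹ * (T - b)⁻¹)) • (w b - w a) + I := by intro I; module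
  rw [e]
  have h0 : 0 < T - t := by linarith
  have hε0 : 0 ≤ ε := (norm_nonneg _).trans (hε b ⟨hab, le_rfl⟩)
  refine (norm_add_le _ _).trans ?_
  have h1 : ‖((T - a)⁻¹ - √((T - a)⁻¹ * (T - b)⁻¹)) • (w b - w a)‖ ≤
      (b - a) * ((T - t) ^ 2)⁻¹ * ε := by
    rw [norm_smul, Real.norm_eq_abs]
    gcongr
    · exact sqrt_bound hab hbt htT
    · exact hε a ⟨le_rfl, hab⟩
  have h2 : ‖∫ r in a..b, ((T - r) ^ 2)⁻¹ • (w b - w r)‖ ≤ (((T - t) ^ 2)⁻¹ * ε) * |b - a| := by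
    apply intervalIntegral.norm_integral_le_of_norm_le_const
    intro r hr
    rw [Set.uIoc_of_le hab] at hr
    have : 0 < T - r := by linarith [hr.2]
    rw [norm_smul, Real.norm_of_nonneg (by positivity)]
    gcongr
    · linarith [hr.2]
    · exact hε r ⟨hr.1.le, hr.2⟩
  rw [abs_of_nonneg (by linarith)] at h2
  linarith

/-- partition point -/
noncomputable def ptBB (a b : ℝ) (n k : ℕ) : ℝ := a + k * ((b - a) / n)

noncomputable def approxBB {ν : ℕ} (T : ℝ) (w : ℝ → Fin ν → ℝ) (a b : ℝ) (n m : ℕ) : Fin ν → ℝ :=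
  ∑ k ∈ Finset.range m, √((T - ptBB a b n k)⁻¹ * (T - ptBB a b n (k+1))⁻¹) •
    (w (ptBB a b n (k+1)) - w (ptBB a b n k))

lemma pt_zero (a b : ℝ) (n : ℕ) : ptBB a b n 0 = a := by simp [ptBB]

lemma pt_last (a b : ℝ) {n : ℕ} (hn : n ≠ 0) : ptBB a b n n = b := by
  simp only [ptBB]; field_simp; ring

lemma pt_succ (a b : ℝ) (n k : ℕ) : ptBB a b n (k+1) - ptBB a b n k = (b - a) / n := by
  simp only [ptBB]; push_cast; ring

lemma pt_le_succ {a b : ℝ} (hab : a ≤ b) (n k : ℕ) : ptBB a b n k ≤ ptBB a b n (k+1) := by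
  have h := pt_succ a b n k
  have : 0 ≤ (b - a) / n := div_nonneg (by linarith) (by positivity)
  linarith

lemma pt_mono {a b : ℝ} (hab : a ≤ b) (n : ℕ) : Monotone (ptBB a b n) :=
  monotone_nat_of_le_succ (pt_le_succ hab n)

lemma le_pt {a b : ℝ} (hab : a ≤ b) (n k : ℕ) : a ≤ ptBB a b n k := by
  have := pt_mono hab n (Nat.zero_le k)
  rwa [pt_zero] at this

lemma pt_le {a b : ℝ} (hab : a ≤ b) {n k : ℕ} (hk : k ≤ n) (hn : n ≠ 0) : ptBB a b n k ≤ b := by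
  have := pt_mono hab n hk
  rwa [pt_last a b hn] at this

lemma approx_tendsto (hw : ContinuousOn w (Set.Ici 0)) {a b : ℝ} (ha : 0 ≤ a) (hab : a ≤ b)
    (hb : b < T) :
    Filter.Tendsto (fun n : ℕ => approxBB T w a b n n) Filter.atTop
      (nhds (martBB T w b - martBB T w a)) := by
  have huc : UniformContinuousOn w (Set.Icc a b) :=
    isCompact_Icc.uniformContinuousOn_of_continuous (hw.mono (fun r hr => ha.trans hr.1))
  rw [Metric.uniformContinuousOn_iff_le] at huc
  rw [Metric.tendsto_atTop]
  intro ε hε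
  have h0 : 0 < T - b := by linarith
  set K := 2 * ((T - b) ^ 2)⁻¹ * (b - a) with hK
  have hK0 : 0 ≤ K := by
    have : 0 ≤ b - a := by linarith
    positivity
  obtain ⟨δ, hδ, H⟩ := huc (ε / (2 * (K + 1))) (by positivity)
  obtain ⟨N, hN⟩ := exists_nat_gt ((b - a) / δ)
  refine ⟨N + 1, fun n hn => ?_⟩
  have hn0 : n ≠ 0 := by omega
  have hnpos : (0 : ℝ) < n := by positivity
  have hstep : (b - a) / n ≤ δ := by
    have : (N : ℝ) ≤ n := by exact_mod_cast (by omega : N ≤ n)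
    rw [div_le_iff₀ hnpos]
    rw [div_lt_iff₀ hδ] at hN
    nlinarith
  rw [dist_comm, dist_eq_norm]
  have tele : martBB T w b - martBB T w a = ∑ k ∈ Finset.range n,
      (martBB T w (ptBB a b n (k+1)) - martBB T w (ptBB a b n k)) := by
    rw [Finset.sum_range_sub (fun k => martBB T w (ptBB a b n k)), pt_zero, pt_last a b hn0]
  rw [tele, approxBB, ← Finset.sum_sub_distrib]
  calc _ ≤ ∑ k ∈ Finset.range n, 2 * ((T - b) ^ 2)⁻¹ * ((b - a) / n) * (ε / (2 * (K + 1))) := by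
        refine (norm_sum_le _ _).trans (Finset.sum_le_sum fun k hk => ?_)
        have hk' : k + 1 ≤ n := by simpa using hk
        have := mart_err (T := T) hw (ε := ε / (2 * (K + 1))) (ha.trans (le_pt hab n k))
          (pt_le_succ hab n k) (pt_le hab hk' hn0) hb ?_
        · rwa [pt_succ] at this
        · intro r hr
          rw [← dist_eq_norm]
          apply H _ ⟨le_pt hab _ _, pt_le hab hk' hn0⟩ _
            ⟨(le_pt hab n k).trans hr.1, hr.2.trans (pt_le hab hk' hn0)⟩
          have := pt_succ a b n k
          rw [Real.dist_eq, abs_of_nonneg (by linarith [hr.2])]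
          linarith [hr.1]
    _ = K * (ε / (2 * (K + 1))) := by
        rw [Finset.sum_const, Finset.card_range, nsmul_eq_mul, hK]
        field_simp
    _ < ε := by
        rw [← mul_div_assoc, div_lt_iff₀ (by positivity)]
        nlinarith

lemma mart_contOn (hw : ContinuousOn w (Set.Ici 0)) {t : ℝ} (htT : t < T) (ht : 0 ≤ t) :
    ContinuousOn (martBB T w) (Set.Icc 0 t) := by
  unfold martBB
  apply ContinuousOn.sub
  · apply ContinuousOn.fun_smul
    · apply ContinuousOn.inv₀ (by fun_prop)
      intro r hr
      linarith [hr.2]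
    · exact hw.mono (fun r hr => hr.1)
  · have h := (contOn_weight hw htT).integrableOn_compact isCompact_Icc (μ := volume)
    have := intervalIntegral.continuousOn_primitive_interval (μ := volume) (a := 0) (b := t)
      (by rwa [Set.uIcc_of_le ht])
    rwa [Set.uIcc_of_le ht] at this

/-- `B_t - B_s = X_t - X_s + ∫ X_u/(T-u)`, with `X_u = (T-u) M_u`. -/
lemma path_identity (hw : ContinuousOn w (Set.Ici 0)) {s t : ℝ} (hs : 0 < s) (hst : s ≤ t)
    (htT : t < T) :
    ∫ u in s..t, martBB T w u = (w t - w s) -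
      ((T - t) • martBB T w t - (T - s) • martBB T w s) := by
  have ht : 0 ≤ t := by linarith
  have key : ∀ u ∈ Set.uIcc s t, HasDerivAt
      (fun u => (T - u) • ∫ r in (0 : ℝ)..u, ((T - r) ^ 2)⁻¹ • w r) (martBB T w u) u := by
    intro u hu
    rw [Set.uIcc_of_le hst] at hu
    have hu0 : 0 < u := by linarith [hu.1]
    have huT : u < T := by linarith [hu.2]
    have h1 : HasDerivAt (fun r => T - r) (-1) u := by
      simpa using (hasDerivAt_id u).const_sub T
    have hc : ∀ v ∈ Set.Ioo 0 T, ContinuousAt (fun r => ((T - r) ^ 2)⁻¹ • w r) v := by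
      intro v hv
      have h2 : 0 < T - v := by linarith [hv.2]
      apply ContinuousAt.fun_smul
      · apply ContinuousAt.inv₀ (by fun_prop)
        positivity
      · exact hw.continuousAt (Ici_mem_nhds hv.1)
    have h2 : HasDerivAt (fun u => ∫ r in (0 : ℝ)..u, ((T - r) ^ 2)⁻¹ • w r)
        (((T - u) ^ 2)⁻¹ • w u) u := by
      apply intervalIntegral.integral_hasDerivAt_right (ii_weight hw le_rfl hu0.le huT)
      · exact ContinuousAt.stronglyMeasurableAtFilter isOpen_Ioo hc u ⟨hu0, huT⟩
      · exact hc u ⟨hu0, huT⟩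
    refine (h1.fun_smul h2).congr_deriv ?_
    have h3 : T - u ≠ 0 := by linarith
    rw [martBB, smul_smul, show (T - u) * ((T - u) ^ 2)⁻¹ = (T - u)⁻¹ by field_simp]
    module
  have hcont : ContinuousOn (martBB T w) (Set.uIcc s t) := by
    rw [Set.uIcc_of_le hst]
    exact (mart_contOn hw htT ht).mono (Set.Icc_subset_Icc hs.le le_rfl)
  rw [intervalIntegral.integral_eq_sub_of_hasDerivAt key hcont.intervalIntegrable]
  simp only [martBB, smul_sub, smul_smul]
  rw [mul_inv_cancel₀ (by linarith), mul_inv_cancel₀ (by linarith)]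
  module

end Det

section Prob

set_option linter.unusedSectionVars false

variable {Ω : Type*} [m : MeasurableSpace Ω] {P : Measure Ω} [IsProbabilityMeasure P] {ν : ℕ}
  {F : Filtration ℝ m} {B : ℝ → Ω → Fin ν → ℝ}

lemma gauss_charFun (v : ℝ) (hv : 0 ≤ v) (η : Fin ν → ℝ) :
    ∫ z, Complex.exp (((η ⬝ᵥ z : ℝ) : ℂ) * Complex.I)
      ∂(Measure.pi fun _ : Fin ν => gaussianReal 0 (Real.toNNReal v)) =
      Complex.exp (-(((η ⬝ᵥ η) * v / 2 : ℝ) : ℂ)) := by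
  have h1 : ∀ z : Fin ν → ℝ, Complex.exp (((η ⬝ᵥ z : ℝ) : ℂ) * Complex.I) =
      ∏ i, Complex.exp ((η i : ℂ) * (z i : ℂ) * Complex.I) := by
    intro z
    rw [← Complex.exp_sum]
    simp [dotProduct, Finset.sum_mul]
  simp_rw [h1]
  rw [integral_fintype_prod_eq_prod (f := fun i (x : ℝ) =>
    Complex.exp ((η i : ℂ) * (x : ℂ) * Complex.I))]
  have h2 : ∀ i, ∫ x : ℝ, Complex.exp ((η i : ℂ) * (x : ℂ) * Complex.I)
      ∂(gaussianReal 0 (Real.toNNReal v)) = Complex.exp (-((η i * η i * v / 2 : ℝ) : ℂ)) := by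
    intro i
    rw [← charFun_apply_real, charFun_gaussianReal]
    rw [Real.coe_toNNReal _ hv]
    congr 1
    push_cast
    ring
  simp_rw [h2]
  rw [← Complex.exp_sum]
  congr 1
  simp [dotProduct, Finset.sum_mul, Finset.sum_div]

lemma norm_expI (r : ℝ) : ‖Complex.exp ((r : ℂ) * Complex.I)‖ = 1 :=
  Complex.norm_exp_ofReal_mul_I r

lemma B_meas (hB : IsBrownianMotion P ν F B) (t : ℝ) : Measurable (B t) :=
  (hB.adapted t).mono (F.le t) le_rfl

lemma dot_meas (η : Fin ν → ℝ) : Measurable (fun z : Fin ν → ℝ => η ⬝ᵥ z) := by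
  unfold dotProduct; fun_prop

lemma dot_cont (η : Fin ν → ℝ) : Continuous (fun z : Fin ν → ℝ => η ⬝ᵥ z) := by
  unfold dotProduct; fun_prop

/-- one-step characteristic function -/
lemma step_charFun (hB : IsBrownianMotion P ν F B) {a b : ℝ} (ha : 0 ≤ a) (hab : a ≤ b)
    (G : Ω → ℂ) (hG : Measurable[F a] G) (η : Fin ν → ℝ) :
    ∫ ω, G ω * Complex.exp (((η ⬝ᵥ (B b ω - B a ω) : ℝ) : ℂ) * Complex.I) ∂P =
      (∫ ω, G ω ∂P) * Complex.exp (-(((η ⬝ᵥ η) * (b - a) / 2 : ℝ) : ℂ)) := by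
  have hd : Measurable (fun ω => B b ω - B a ω) := (B_meas hB b).sub (B_meas hB a)
  have hφ : Measurable (fun z : Fin ν → ℝ => Complex.exp (((η ⬝ᵥ z : ℝ) : ℂ) * Complex.I)) := by
    have := dot_meas η
    fun_prop
  have hGm : Measurable G := hG.mono (F.le a) le_rfl
  have hind : IndepFun G (fun ω => B b ω - B a ω) P := by
    rw [IndepFun_iff_Indep]
    exact indep_of_indep_of_le_left (hB.indepIncr a b ha hab).symm hG.comap_le
  have h := (hind.comp measurable_id hφ).integral_fun_mul_eq_mul_integral
    hGm.aestronglyMeasurable (hφ.comp hd).aestronglyMeasurable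
  have h3 : ∫ ω, Complex.exp (((η ⬝ᵥ (B b ω - B a ω) : ℝ) : ℂ) * Complex.I) ∂P =
      Complex.exp (-(((η ⬝ᵥ η) * (b - a) / 2 : ℝ) : ℂ)) := by
    rw [← gauss_charFun (b - a) (by linarith) η, ← hB.gaussIncr a b ha hab,
      integral_map hd.aemeasurable hφ.aestronglyMeasurable]
  rw [← h3]
  exact h

lemma approx_meas (hB : IsBrownianMotion P ν F B) (T : ℝ) {a b : ℝ} (hab : a ≤ b) (n k : ℕ) :
    Measurable[F (ptBB a b n k)] (fun ω => approxBB T (fun r => B r ω) a b n k) := by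
  unfold approxBB
  apply Finset.measurable_sum
  intro i hi
  have hi' : i + 1 ≤ k := by simpa using hi
  have h1 : Measurable[F (ptBB a b n k)] (B (ptBB a b n (i+1))) :=
    (hB.adapted _).mono (F.mono (pt_mono hab n hi')) le_rfl
  have h2 : Measurable[F (ptBB a b n k)] (B (ptBB a b n i)) :=
    (hB.adapted _).mono (F.mono (pt_mono hab n (by omega))) le_rfl
  exact (h1.sub h2).const_smul (√((T - ptBB a b n i)⁻¹ * (T - ptBB a b n (i+1))⁻¹))

lemma approx_charFun (hB : IsBrownianMotion P ν F B) {T : ℝ} {a b : ℝ} (ha : 0 ≤ a)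
    (hab : a ≤ b) (hbT : b < T)
    (G : Ω → ℂ) (hG : Measurable[F a] G) (η : Fin ν → ℝ) (n : ℕ) (hn : n ≠ 0) (k : ℕ)
    (hk : k ≤ n) :
    ∫ ω, G ω * Complex.exp (((η ⬝ᵥ (approxBB T (fun r => B r ω) a b n k) : ℝ) : ℂ) * Complex.I) ∂P =
      (∫ ω, G ω ∂P) * Complex.exp (-(((η ⬝ᵥ η) *
        ((T - ptBB a b n k)⁻¹ - (T - a)⁻¹) / 2 : ℝ) : ℂ)) := by
  induction k with
  | zero => simp [approxBB, pt_zero]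
  | succ k ih =>
    specialize ih (by omega)
    set p := ptBB a b n k with hp
    set q := ptBB a b n (k+1) with hq
    have hpq : p ≤ q := pt_le_succ hab n k
    have hqb : q ≤ b := pt_le hab hk hn
    have hap : a ≤ p := le_pt hab n k
    have hTq : 0 < T - q := by linarith
    have hTp : 0 < T - p := by linarith
    set c := √((T - p)⁻¹ * (T - q)⁻¹) with hc
    have hc2 : c * c = (T - p)⁻¹ * (T - q)⁻¹ := Real.mul_self_sqrt (by positivity)
    have hGm : Measurable[F p] (fun ω => G ω *
        Complex.exp (((η ⬝ᵥ (approxBB T (fun r => B r ω) a b n k) : ℝ) : ℂ) * Complex.I)) := by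
      have h1 : Measurable[F p] G := hG.mono (F.mono hap) le_rfl
      have h2 := (dot_meas η).comp (approx_meas hB T hab n k)
      have h3 : Measurable (fun r : ℝ => Complex.exp ((r : ℂ) * Complex.I)) := by fun_prop
      exact h1.mul (h3.comp h2)
    have := step_charFun hB (ha.trans hap) hpq _ hGm (c • η)
    rw [ih] at this
    have e1 : ∀ ω, G ω * Complex.exp (((η ⬝ᵥ (approxBB T (fun r => B r ω) a b n (k+1)) : ℝ) : ℂ)
        * Complex.I) = G ω *
        Complex.exp (((η ⬝ᵥ (approxBB T (fun r => B r ω) a b n k) : ℝ) : ℂ) * Complex.I) *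
        Complex.exp (((((c • η) ⬝ᵥ (B q ω - B p ω)) : ℝ) : ℂ) * Complex.I) := by
      intro ω
      have : approxBB T (fun r => B r ω) a b n (k+1) =
          approxBB T (fun r => B r ω) a b n k + c • (B q ω - B p ω) := by
        rw [approxBB, Finset.sum_range_succ]; rfl
      rw [this, mul_assoc, ← Complex.exp_add, dotProduct_add, dotProduct_smul, smul_dotProduct]
      congr 2
      push_cast
      ring
    simp_rw [e1]
    rw [this, mul_assoc, ← Complex.exp_add]
    congr 2
    rw [smul_dotProduct, dotProduct_smul, smul_smul, hc2, smul_eq_mul]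
    rw [← Complex.ofReal_neg, ← Complex.ofReal_neg, ← Complex.ofReal_neg, ← Complex.ofReal_add]
    congr 1
    field_simp
    ring

lemma mart_zero (hB : IsBrownianMotion P ν F B) (T : ℝ) (ω : Ω) :
    martBB T (fun r => B r ω) 0 = 0 := by
  simp [martBB, hB.start]

lemma mart_meas (hB : IsBrownianMotion P ν F B) {T : ℝ} {u : ℝ} (hu : 0 ≤ u) (huT : u < T) :
    Measurable[F u] (fun ω => martBB T (fun r => B r ω) u) := by
  refine @measurable_of_tendsto_metrizable' Ω _ (F u) _ _ _ _ ℕ _ Filter.atTop _ _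
    (f := fun n ω => approxBB T (fun r => B r ω) 0 u (n + 1) (n + 1)) ?_ ?_
  · intro n
    have := approx_meas hB T hu (n+1) (n+1)
    rwa [pt_last 0 u (by omega)] at this
  · rw [tendsto_pi_nhds]
    intro ω
    have h := approx_tendsto (hB.contPaths ω) le_rfl hu huT
    rw [mart_zero hB, sub_zero] at h
    exact h.comp (Filter.tendsto_add_atTop_nat 1)

lemma mart_charFun (hB : IsBrownianMotion P ν F B) {T : ℝ} {a b : ℝ} (ha : 0 ≤ a)
    (hab : a ≤ b) (hbT : b < T)
    (G : Ω → ℂ) (hG : Measurable[F a] G) (hG1 : ∀ ω, ‖G ω‖ ≤ 1) (η : Fin ν → ℝ) :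
    ∫ ω, G ω * Complex.exp (((η ⬝ᵥ (martBB T (fun r => B r ω) b - martBB T (fun r => B r ω) a) : ℝ) : ℂ)
      * Complex.I) ∂P =
      (∫ ω, G ω ∂P) * Complex.exp (-(((η ⬝ᵥ η) * ((T - b)⁻¹ - (T - a)⁻¹) / 2 : ℝ) : ℂ)) := by
  have hGm : Measurable G := hG.mono (F.le a) le_rfl
  have h3 : Continuous (fun z : Fin ν → ℝ => Complex.exp (((η ⬝ᵥ z : ℝ) : ℂ) * Complex.I)) := by
    have := dot_cont η
    fun_prop
  have lim : Filter.Tendsto (fun n : ℕ => ∫ ω, G ω * Complex.exp (((η ⬝ᵥ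
      (approxBB T (fun r => B r ω) a b (n+1) (n+1)) : ℝ) : ℂ) * Complex.I) ∂P) Filter.atTop
      (nhds (∫ ω, G ω * Complex.exp (((η ⬝ᵥ (martBB T (fun r => B r ω) b -
        martBB T (fun r => B r ω) a) : ℝ) : ℂ) * Complex.I) ∂P)) := by
    apply tendsto_integral_of_dominated_convergence (fun _ => (1 : ℝ))
    · intro n
      have h4 : Measurable (fun ω => approxBB T (fun r => B r ω) a b (n+1) (n+1)) :=
        (approx_meas hB T hab (n+1) (n+1)).mono (F.le _) le_rfl
      exact (hGm.mul (h3.measurable.comp h4)).aestronglyMeasurable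
    · exact integrable_const _
    · intro n
      filter_upwards with ω
      rw [norm_mul, norm_expI, mul_one]
      exact hG1 ω
    · filter_upwards with ω
      have h := (approx_tendsto (hB.contPaths ω) ha hab hbT).comp (Filter.tendsto_add_atTop_nat 1)
      exact ((h3.tendsto _).comp h).const_mul _
  refine tendsto_nhds_unique lim ?_
  have : ∀ n : ℕ, ∫ ω, G ω * Complex.exp (((η ⬝ᵥ
      (approxBB T (fun r => B r ω) a b (n+1) (n+1)) : ℝ) : ℂ) * Complex.I) ∂P =
      (∫ ω, G ω ∂P) * Complex.exp (-(((η ⬝ᵥ η) * ((T - b)⁻¹ - (T - a)⁻¹) / 2 : ℝ) : ℂ)) := by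
    intro n
    rw [approx_charFun hB ha hab hbT G hG η (n+1) (by omega) (n+1) le_rfl,
      pt_last a b (by omega)]
  simp_rw [this]
  exact tendsto_const_nhds

lemma pair_charFun (hB : IsBrownianMotion P ν F B) {T : ℝ} {u t : ℝ} (hu : 0 ≤ u)
    (hut : u ≤ t) (htT : t < T) (η ξ : Fin ν → ℝ) :
    ∫ ω, Complex.exp (((η ⬝ᵥ martBB T (fun r => B r ω) u +
      ξ ⬝ᵥ martBB T (fun r => B r ω) t : ℝ) : ℂ) * Complex.I) ∂P =
      Complex.exp (-((((η + ξ) ⬝ᵥ (η + ξ)) * ((T - u)⁻¹ - T⁻¹) / 2 +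
        (ξ ⬝ᵥ ξ) * ((T - t)⁻¹ - (T - u)⁻¹) / 2 : ℝ) : ℂ)) := by
  have huT : u < T := hut.trans_lt htT
  have h3 : Measurable (fun r : ℝ => Complex.exp ((r : ℂ) * Complex.I)) := by fun_prop
  have A := mart_charFun hB le_rfl hu huT (fun _ => 1) measurable_const (by simp) (η + ξ)
  simp only [mart_zero hB, sub_zero, one_mul, integral_const, probReal_univ, one_smul] at A
  have C := mart_charFun hB hu hut htT
    (fun ω => Complex.exp ((((η + ξ) ⬝ᵥ martBB T (fun r => B r ω) u : ℝ) : ℂ) * Complex.I))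
    (h3.comp ((dot_meas (η + ξ)).comp (mart_meas hB hu huT))) (fun ω => (norm_expI _).le) ξ
  rw [A, ← Complex.exp_add] at C
  have e : ∀ ω, Complex.exp (((η ⬝ᵥ martBB T (fun r => B r ω) u +
      ξ ⬝ᵥ martBB T (fun r => B r ω) t : ℝ) : ℂ) * Complex.I) =
      Complex.exp ((((η + ξ) ⬝ᵥ martBB T (fun r => B r ω) u : ℝ) : ℂ) * Complex.I) *
      Complex.exp (((ξ ⬝ᵥ (martBB T (fun r => B r ω) t - martBB T (fun r => B r ω) u) : ℝ) : ℂ)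
      * Complex.I) := by
    intro ω
    rw [← Complex.exp_add, add_dotProduct, dotProduct_sub]
    congr 1
    push_cast
    ring
  simp_rw [e]
  rw [C]
  congr 1
  push_cast
  ring

lemma dual_eq_dot (L : StrongDual ℝ (Fin ν → ℝ)) :
    ∃ η : Fin ν → ℝ, ∀ z, L z = η ⬝ᵥ z := by
  refine ⟨fun i => L (Pi.single i 1), fun z => ?_⟩
  conv_lhs => rw [pi_eq_sum_univ' z, map_sum]
  simp only [dotProduct]
  refine Finset.sum_congr rfl fun i _ => ?_
  rw [map_smul, smul_eq_mul, mul_comm]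

lemma mart_indep (hB : IsBrownianMotion P ν F B) {T : ℝ} {u t : ℝ} (hu : 0 ≤ u)
    (hut : u ≤ t) (ht : 0 < t) (htT : t < T) :
    IndepFun (fun ω => martBB T (fun r => B r ω) t)
      (fun ω => martBB T (fun r => B r ω) u -
        (u * (T - t) / (t * (T - u))) • martBB T (fun r => B r ω) t) P := by
  have huT : u < T := hut.trans_lt htT
  have mu : Measurable (fun ω => martBB T (fun r => B r ω) u) :=
    (mart_meas hB hu huT).mono (F.le _) le_rfl
  have mt : Measurable (fun ω => martBB T (fun r => B r ω) t) :=
    (mart_meas hB ht.le htT).mono (F.le _) le_rfl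
  set c := u * (T - t) / (t * (T - u)) with hc
  have mD : Measurable (fun ω => martBB T (fun r => B r ω) u -
        c • martBB T (fun r => B r ω) t) := mu.sub (mt.const_smul c)
  rw [indepFun_iff_charFunDual_prod mt.aemeasurable mD.aemeasurable]
  intro L
  obtain ⟨ξ, hξ⟩ := dual_eq_dot (L.comp (.inl ℝ (Fin ν → ℝ) (Fin ν → ℝ)))
  obtain ⟨η, hη⟩ := dual_eq_dot (L.comp (.inr ℝ (Fin ν → ℝ) (Fin ν → ℝ)))
  have hL : ∀ p q : Fin ν → ℝ, L (p, q) = ξ ⬝ᵥ p + η ⬝ᵥ q := by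
    intro p q
    rw [← hξ, ← hη]
    simp [← map_add]
  simp only [charFunDual_apply]
  have hm : ∀ L' : StrongDual ℝ (Fin ν → ℝ),
      Measurable (fun z => Complex.exp ((L' z : ℂ) * Complex.I)) := by
    intro L'; have := L'.continuous.measurable; fun_prop
  have hm2 : Measurable (fun z => Complex.exp ((L z : ℂ) * Complex.I)) := by
    have := L.continuous.measurable; fun_prop
  rw [integral_map (mt.prodMk mD).aemeasurable hm2.aestronglyMeasurable,
    integral_map mt.aemeasurable (hm _).aestronglyMeasurable,
    integral_map mD.aemeasurable (hm _).aestronglyMeasurable]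
  simp only [hL, hξ, hη]
  have e : ∀ (ξ η : Fin ν → ℝ) ω, ξ ⬝ᵥ martBB T (fun r => B r ω) t +
      η ⬝ᵥ (martBB T (fun r => B r ω) u - c • martBB T (fun r => B r ω) t) =
      η ⬝ᵥ martBB T (fun r => B r ω) u + (ξ - c • η) ⬝ᵥ martBB T (fun r => B r ω) t := by
    intro ξ η ω
    rw [dotProduct_sub, sub_dotProduct, smul_dotProduct, dotProduct_smul]
    ring
  have f1 : ∫ ω, Complex.exp (((ξ ⬝ᵥ martBB T (fun r => B r ω) t : ℝ) : ℂ) * Complex.I) ∂P =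
      Complex.exp (-((((0 + ξ) ⬝ᵥ (0 + ξ)) * ((T - u)⁻¹ - T⁻¹) / 2 +
        (ξ ⬝ᵥ ξ) * ((T - t)⁻¹ - (T - u)⁻¹) / 2 : ℝ) : ℂ)) := by
    rw [← pair_charFun hB hu hut htT 0 ξ]
    simp only [zero_dotProduct, zero_add]
  have f2 : ∫ ω, Complex.exp (((η ⬝ᵥ (martBB T (fun r => B r ω) u -
      c • martBB T (fun r => B r ω) t) : ℝ) : ℂ) * Complex.I) ∂P =
      Complex.exp (-((((η + (0 - c • η)) ⬝ᵥ (η + (0 - c • η))) * ((T - u)⁻¹ - T⁻¹) / 2 +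
        ((0 - c • η) ⬝ᵥ (0 - c • η)) * ((T - t)⁻¹ - (T - u)⁻¹) / 2 : ℝ) : ℂ)) := by
    have := pair_charFun hB hu hut htT η (0 - c • η)
    rw [← this]
    congr 1
    ext ω
    rw [← e, zero_dotProduct, zero_add]
  simp_rw [e]
  rw [f1, f2, pair_charFun hB hu hut htT, ← Complex.exp_add]
  congr 1
  rw [← Complex.ofReal_neg, ← Complex.ofReal_neg, ← Complex.ofReal_neg, ← Complex.ofReal_add]
  congr 1
  simp only [add_dotProduct, dotProduct_add, sub_dotProduct, dotProduct_sub, smul_dotProduct,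
    dotProduct_smul, zero_dotProduct, dotProduct_zero, smul_eq_mul]
  rw [dotProduct_comm η ξ]
  have hTt : T - t ≠ 0 := by linarith
  have hTu : T - u ≠ 0 := by linarith
  have hT : T ≠ 0 := by linarith
  rw [hc]
  field_simp
  ring

lemma mart_law (hB : IsBrownianMotion P ν F B) {T : ℝ} {u : ℝ} (hu : 0 ≤ u)
    (huT : u < T) (j : Fin ν) :
    P.map (fun ω => martBB T (fun r => B r ω) u j) =
      gaussianReal 0 (Real.toNNReal ((T - u)⁻¹ - T⁻¹)) := by
  have mu : Measurable (fun ω => martBB T (fun r => B r ω) u) :=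
    (mart_meas hB hu huT).mono (F.le _) le_rfl
  have muj : Measurable (fun ω => martBB T (fun r => B r ω) u j) := (measurable_pi_apply j).comp mu
  have hpos : 0 ≤ (T - u)⁻¹ - T⁻¹ := by
    have : 0 < T - u := by linarith
    have : T⁻¹ ≤ (T - u)⁻¹ := by gcongr; linarith
    linarith
  have : IsProbabilityMeasure (P.map (fun ω => martBB T (fun r => B r ω) u j)) :=
    Measure.isProbabilityMeasure_map muj.aemeasurable
  apply Measure.ext_of_charFun
  ext x
  rw [charFun_gaussianReal, charFun_apply_real, integral_map muj.aemeasurable (by fun_prop)]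
  have A := mart_charFun hB le_rfl hu huT (fun _ => 1) measurable_const (by simp) (Pi.single j x)
  simp only [mart_zero hB, sub_zero, one_mul, integral_const, probReal_univ, one_smul,
    single_dotProduct, Pi.single_eq_same] at A
  push_cast at A ⊢
  rw [A, Real.coe_toNNReal _ hpos]
  congr 1
  push_cast
  ring

lemma mart_int (hB : IsBrownianMotion P ν F B) {T : ℝ} {u : ℝ} (hu : 0 ≤ u)
    (huT : u < T) : Integrable (fun ω => martBB T (fun r => B r ω) u) P := by
  have mu : Measurable (fun ω => martBB T (fun r => B r ω) u) :=
    (mart_meas hB hu huT).mono (F.le _) le_rfl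
  apply Integrable.of_eval
  intro j
  have muj : Measurable (fun ω => martBB T (fun r => B r ω) u j) := (measurable_pi_apply j).comp mu
  have h : Integrable id (P.map (fun ω => martBB T (fun r => B r ω) u j)) := by
    rw [mart_law hB hu huT j]
    exact (memLp_id_gaussianReal 1).integrable le_rfl
  exact h.comp_measurable muj

lemma mart_mean (hB : IsBrownianMotion P ν F B) {T : ℝ} {u : ℝ} (hu : 0 ≤ u)
    (huT : u < T) : ∫ ω, martBB T (fun r => B r ω) u ∂P = 0 := by
  have mu : Measurable (fun ω => martBB T (fun r => B r ω) u) :=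
    (mart_meas hB hu huT).mono (F.le _) le_rfl
  ext j
  have muj : Measurable (fun ω => martBB T (fun r => B r ω) u j) := (measurable_pi_apply j).comp mu
  rw [eval_integral (fun i => (mart_int hB hu huT).eval i)]
  have := integral_map (μ := P) muj.aemeasurable (f := fun x : ℝ => x) (by fun_prop)
  rw [← this, mart_law hB hu huT j, integral_id_gaussianReal]
  rfl

lemma mart_abs (hB : IsBrownianMotion P ν F B) {T : ℝ} {u : ℝ} (hu : 0 ≤ u)
    (huT : u < T) : ∫ ω, ‖martBB T (fun r => B r ω) u‖ ∂P ≤ ν * (1 + ((T - u)⁻¹ - T⁻¹)) := by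
  have mu : Measurable (fun ω => martBB T (fun r => B r ω) u) :=
    (mart_meas hB hu huT).mono (F.le _) le_rfl
  have hpos : 0 ≤ (T - u)⁻¹ - T⁻¹ := by
    have : 0 < T - u := by linarith
    have : T⁻¹ ≤ (T - u)⁻¹ := by gcongr; linarith
    linarith
  have hint := mart_int hB hu huT
  calc _ ≤ ∫ ω, ∑ j, ‖martBB T (fun r => B r ω) u j‖ ∂P := by
        apply integral_mono hint.norm
        · exact integrable_finsetSum _ fun j _ => (hint.eval j).norm
        · intro ω
          refine (pi_norm_le_iff_of_nonneg (Finset.sum_nonneg fun _ _ => norm_nonneg _)).2 fun j => ?_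
          exact Finset.single_le_sum (f := fun j => ‖martBB T (fun r => B r ω) u j‖)
            (fun _ _ => norm_nonneg _) (Finset.mem_univ j)
    _ = ∑ j, ∫ ω, ‖martBB T (fun r => B r ω) u j‖ ∂P :=
        integral_finsetSum _ fun j _ => (hint.eval j).norm
    _ ≤ ∑ j : Fin ν, (1 + ((T - u)⁻¹ - T⁻¹)) := by
        refine Finset.sum_le_sum fun j _ => ?_
        have muj : Measurable (fun ω => martBB T (fun r => B r ω) u j) :=
          (measurable_pi_apply j).comp mu
        have := integral_map (μ := P) muj.aemeasurable (f := fun x : ℝ => ‖x‖) (by fun_prop)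
        rw [← this, mart_law hB hu huT j]
        set v := Real.toNNReal ((T - u)⁻¹ - T⁻¹) with hv
        have i2 : Integrable (fun x : ℝ => x ^ 2) (gaussianReal 0 v) :=
          (memLp_id_gaussianReal 2).integrable_sq
        have hvar : ∫ x, x ^ 2 ∂(gaussianReal 0 v) = v := by
          have h := variance_id_gaussianReal (μ := 0) (v := v)
          rw [variance_eq_integral (by fun_prop)] at h
          simpa using h
        calc _ ≤ ∫ x, (1 + x ^ 2) ∂(gaussianReal 0 v) := by
              apply integral_mono
              · exact ((memLp_id_gaussianReal 1).integrable le_rfl).norm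
              · exact (integrable_const 1).add i2
              · intro x
                simp only [Real.norm_eq_abs]
                nlinarith [sq_abs x, sq_nonneg (|x| - 1), abs_nonneg x]
          _ = 1 + ((T - u)⁻¹ - T⁻¹) := by
              rw [integral_add (integrable_const 1) i2, hvar, hv, Real.coe_toNNReal _ hpos]
              simp
    _ = _ := by simp; ring

lemma mart_regress (hB : IsBrownianMotion P ν F B) {T : ℝ} {u t : ℝ} (hu : 0 ≤ u)
    (hut : u ≤ t) (ht : 0 < t) (htT : t < T) (g : (Fin ν → ℝ) → ℝ) (hg : Measurable g)
    (hgb : ∃ C, ∀ z, |g z| ≤ C) :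
    ∫ ω, g (martBB T (fun r => B r ω) t) • martBB T (fun r => B r ω) u ∂P =
      (u * (T - t) / (t * (T - u))) •
        ∫ ω, g (martBB T (fun r => B r ω) t) • martBB T (fun r => B r ω) t ∂P := by
  obtain ⟨C, hC⟩ := hgb
  have huT : u < T := hut.trans_lt htT
  have mu : Measurable (fun ω => martBB T (fun r => B r ω) u) :=
    (mart_meas hB hu huT).mono (F.le _) le_rfl
  have mt : Measurable (fun ω => martBB T (fun r => B r ω) t) :=
    (mart_meas hB ht.le htT).mono (F.le _) le_rfl
  have iu := mart_int hB hu huT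
  have it := mart_int hB ht.le htT
  have hind := mart_indep hB hu hut ht htT
  set c := u * (T - t) / (t * (T - u)) with hc
  have mD : Measurable (fun ω => martBB T (fun r => B r ω) u -
        c • martBB T (fun r => B r ω) t) := mu.sub (mt.const_smul c)
  have h := hind.integral_fun_comp_smul_comp (f := g) (g := fun z => z) mt.aemeasurable
    mD.aemeasurable hg.aestronglyMeasurable (by fun_prop)
  have hz : ∫ ω, (martBB T (fun r => B r ω) u - c • martBB T (fun r => B r ω) t) ∂P = 0 := by
    rw [integral_sub iu (it.fun_smul c), integral_smul, mart_mean hB hu huT, mart_mean hB ht.le htT]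
    simp
  rw [hz, smul_zero] at h
  have gi : ∀ Y : Ω → Fin ν → ℝ, Integrable Y P →
      Integrable (fun ω => g (martBB T (fun r => B r ω) t) • Y ω) P := by
    intro Y hY
    exact hY.bdd_smul C (hg.comp mt).aestronglyMeasurable
      (Filter.Eventually.of_forall fun ω => hC _)
  have e : ∀ ω, g (martBB T (fun r => B r ω) t) • (martBB T (fun r => B r ω) u -
      c • martBB T (fun r => B r ω) t) = g (martBB T (fun r => B r ω) t) • martBB T (fun r => B r ω) u
      - c • (g (martBB T (fun r => B r ω) t) • martBB T (fun r => B r ω) t) := by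
    intro ω; module
  simp_rw [e] at h
  rw [integral_sub (gi _ iu) ((gi _ it).fun_smul c), integral_smul] at h
  exact sub_eq_zero.1 h

end Prob

section Fubini

variable {Ω : Type*} [m : MeasurableSpace Ω] {P : Measure Ω} [IsProbabilityMeasure P] {ν : ℕ}
  {F : Filtration ℝ m} {B : ℝ → Ω → Fin ν → ℝ}

/-- clamped process, continuous on the whole line -/
noncomputable def clampBB (T t : ℝ) (w : ℝ → Fin ν → ℝ) (u : ℝ) : Fin ν → ℝ :=
  martBB T w (max 0 (min u t))

lemma clamp_eq (T : ℝ) {t u : ℝ} (w : ℝ → Fin ν → ℝ) (hu : 0 ≤ u) (hut : u ≤ t) :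
    clampBB T t w u = martBB T w u := by
  simp [clampBB, hu, hut]

lemma fubini_int (hB : IsBrownianMotion P ν F B) {T s t : ℝ} (hs : 0 < s) (hst : s < t)
    (htT : t < T) (g : (Fin ν → ℝ) → ℝ) (hg : Measurable g) (C : ℝ) (hC : ∀ z, |g z| ≤ C) :
    Integrable (Function.uncurry fun (u : ℝ) (ω : Ω) =>
      g (martBB T (fun r => B r ω) t) • ((T - u) / u) • clampBB T t (fun r => B r ω) u)
      ((volume.restrict (Set.Ioc s t)).prod P) := by
  have ht : 0 < t := hs.trans hst
  have mt : Measurable (fun ω => martBB T (fun r => B r ω) t) :=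
    (mart_meas hB ht.le htT).mono (F.le _) le_rfl
  have hclT : ∀ u : ℝ, max 0 (min u t) < T := fun u =>
    max_lt (ht.trans htT) ((min_le_right _ _).trans_lt htT)
  have hN : Measurable (Function.uncurry fun (u : ℝ) (ω : Ω) => clampBB T t (fun r => B r ω) u) := by
    apply measurable_uncurry_of_continuous_of_measurable
    · intro ω
      unfold clampBB
      exact (mart_contOn (hB.contPaths ω) htT ht.le).comp_continuous (by fun_prop)
        (fun u => ⟨le_max_left _ _, max_le ht.le (min_le_right _ _)⟩)
    · intro u
      exact (mart_meas hB (le_max_left _ _) (hclT u)).mono (F.le _) le_rfl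
  have hH : Measurable (Function.uncurry fun (u : ℝ) (ω : Ω) =>
      g (martBB T (fun r => B r ω) t) • ((T - u) / u) • clampBB T t (fun r => B r ω) u) := by
    have h1 : Measurable (fun p : ℝ × Ω => g (martBB T (fun r => B r p.2) t)) :=
      hg.comp (mt.comp measurable_snd)
    have h2 : Measurable (fun p : ℝ × Ω => (T - p.1) / p.1) := by fun_prop
    exact h1.smul (h2.smul hN)
  have hC0 : 0 ≤ C := (abs_nonneg _).trans (hC 0)
  rw [integrable_prod_iff hH.aestronglyMeasurable]
  constructor
  · filter_upwards with u
    have h1 : Integrable (fun ω => clampBB T t (fun r => B r ω) u) P :=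
      mart_int hB (le_max_left _ _) (hclT u)
    exact (h1.fun_smul ((T - u) / u)).bdd_smul C (hg.comp mt).aestronglyMeasurable
      (Filter.Eventually.of_forall fun ω => hC _)
  · apply Integrable.of_bound (C := C * (T / s) * (ν * (1 + ((T - t)⁻¹ - T⁻¹))))
    · exact hH.aestronglyMeasurable.norm.integral_prod_right'
    · filter_upwards [ae_restrict_mem measurableSet_Ioc] with u hu
      have hu0 : 0 < u := hs.trans hu.1
      have huT : u < T := hu.2.trans_lt htT
      have hTt : 0 < T - t := by linarith
      have hi := mart_int hB hu0.le huT
      rw [Real.norm_of_nonneg (integral_nonneg fun _ => norm_nonneg _)]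
      simp only [Function.uncurry]
      calc _ ≤ ∫ ω, C * (T / s) * ‖martBB T (fun r => B r ω) u‖ ∂P := by
            apply integral_mono_of_nonneg (Filter.Eventually.of_forall fun _ => norm_nonneg _)
              (hi.norm.const_mul _)
            filter_upwards with ω
            rw [clamp_eq T _ hu0.le hu.2, norm_smul, norm_smul, mul_assoc]
            have h2 : ‖(T - u) / u‖ ≤ T / s := by
              rw [Real.norm_of_nonneg (div_nonneg (by linarith) hu0.le)]
              gcongr
              · linarith
              · linarith
              · exact hu.1.le
            gcongr
            exact hC _
        _ ≤ _ := by
            rw [integral_const_mul]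
            have hT : 0 < T := by linarith
            gcongr
            refine (mart_abs hB hu0.le huT).trans ?_
            gcongr
            exact hu.2

end Fubini

/-- For `0 < s < t < T` and bounded Borel `f : ℝ^ν → ℝ`, the
`ℝ^ν`-valued identity
`E[f(b_t)(B_t − B_s)] = −E[f(b_t) ∫ₛᵗ ((x − b_u)/u + (y − b_u)/(T−u)) du]` holds. -/
theorem statement13 {Ω : Type*} [m : MeasurableSpace Ω] (P : Measure Ω)
    [IsProbabilityMeasure P] (ν : ℕ) (hν : 0 < ν) (F : Filtration ℝ m)
    (B : ℝ → Ω → Fin ν → ℝ) (hB : IsBrownianMotion P ν F B) (T : ℝ) (hT : 0 < T)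
    (x y : Fin ν → ℝ) (s t : ℝ) (hs : 0 < s) (hst : s < t) (htT : t < T)
    (f : (Fin ν → ℝ) → ℝ) (hfm : Measurable f) (hfb : ∃ C, ∀ z, |f z| ≤ C) :
    ∫ ω, f (bridgeBB ν T x y (fun u => B u ω) t) • (B t ω - B s ω) ∂P =
      -∫ ω, f (bridgeBB ν T x y (fun u => B u ω) t) •
          (∫ u in s..t,
            (u⁻¹ • (x - bridgeBB ν T x y (fun r => B r ω) u) +
              (T - u)⁻¹ • (y - bridgeBB ν T x y (fun r => B r ω) u))) ∂P := by

  obtain ⟨C, hC⟩ := hfb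
  have ht : 0 < t := hs.trans hst
  have hsT : s < T := hst.trans htT
  set g : (Fin ν → ℝ) → ℝ := fun z => f ((t / T) • y + ((T - t) / T) • x + (T - t) • z) with hg
  have hgm : Measurable g := hfm.comp (by fun_prop)
  have hgC : ∀ z, |g z| ≤ C := fun z => hC _
  have hbr : ∀ ω u, u < T → bridgeBB ν T x y (fun r => B r ω) u =
      (u / T) • y + ((T - u) / T) • x + (T - u) • martBB T (fun r => B r ω) u := by
    intro ω u hu
    have hTu : T - u ≠ 0 := by linarith
    rw [bridgeBB, if_pos hu, martBB, smul_sub, smul_smul, mul_inv_cancel₀ hTu]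
    module
  have hf : ∀ ω, f (bridgeBB ν T x y (fun u => B u ω) t) = g (martBB T (fun r => B r ω) t) := by
    intro ω; rw [hbr ω t htT]
  have mt : Measurable (fun ω => martBB T (fun r => B r ω) t) :=
    (mart_meas hB ht.le htT).mono (F.le _) le_rfl
  -- pathwise rewriting of the drift integral
  have hK : ∀ ω, (∫ u in s..t,
            (u⁻¹ • (x - bridgeBB ν T x y (fun r => B r ω) u) +
              (T - u)⁻¹ • (y - bridgeBB ν T x y (fun r => B r ω) u))) =
      ((T - t) • martBB T (fun r => B r ω) t - (T - s) • martBB T (fun r => B r ω) s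
        - ∫ u in s..t, ((T - u) / u) • clampBB T t (fun r => B r ω) u) - (B t ω - B s ω) := by
    intro ω
    have hcont : ContinuousOn (martBB T (fun r => B r ω)) (Set.uIcc s t) := by
      rw [Set.uIcc_of_le hst.le]
      exact (mart_contOn (hB.contPaths ω) htT ht.le).mono (Set.Icc_subset_Icc hs.le le_rfl)
    have hcont2 : ContinuousOn (fun u => ((T - u) / u) • martBB T (fun r => B r ω) u)
        (Set.uIcc s t) := by
      refine ContinuousOn.fun_smul (ContinuousOn.div (by fun_prop) (by fun_prop) ?_) hcont
      intro u hu
      rw [Set.uIcc_of_le hst.le] at hu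
      linarith [hu.1]
    have e1 : ∫ u in s..t, ((T - u) / u) • clampBB T t (fun r => B r ω) u =
        ∫ u in s..t, ((T - u) / u) • martBB T (fun r => B r ω) u := by
      apply intervalIntegral.integral_congr
      intro u hu
      rw [Set.uIcc_of_le hst.le] at hu
      simp only
      rw [clamp_eq T _ (hs.le.trans hu.1) hu.2]
    have e2 : (∫ u in s..t,
            (u⁻¹ • (x - bridgeBB ν T x y (fun r => B r ω) u) +
              (T - u)⁻¹ • (y - bridgeBB ν T x y (fun r => B r ω) u))) =
        ∫ u in s..t, (-(((T - u) / u) • martBB T (fun r => B r ω) u) -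
          martBB T (fun r => B r ω) u) := by
      apply intervalIntegral.integral_congr
      intro u hu
      rw [Set.uIcc_of_le hst.le] at hu
      have hu0 : u ≠ 0 := by linarith [hu.1]
      have hTu : T - u ≠ 0 := by linarith [hu.2]
      have hT0 : T ≠ 0 := hT.ne'
      simp only
      rw [hbr ω u (by linarith [hu.2])]
      ext j
      simp only [Pi.add_apply, Pi.sub_apply, Pi.smul_apply, Pi.neg_apply, smul_eq_mul]
      field_simp
      ring
    rw [e2, e1, intervalIntegral.integral_sub hcont2.fun_neg.intervalIntegrable
      hcont.intervalIntegrable, intervalIntegral.integral_neg,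
      path_identity (hB.contPaths ω) hs hst.le htT]
    abel
  have hfub := fubini_int hB hs hst htT g hgm C hgC
  have gi : ∀ Y : Ω → Fin ν → ℝ, Integrable Y P →
      Integrable (fun ω => g (martBB T (fun r => B r ω) t) • Y ω) P := by
    intro Y hY
    exact hY.bdd_smul C (hgm.comp mt).aestronglyMeasurable
      (Filter.Eventually.of_forall fun ω => hgC _)
  have hincr : Integrable (fun ω => B t ω - B s ω) P := by
    have hd : Measurable (fun ω => B t ω - B s ω) := (B_meas hB t).sub (B_meas hB s)
    have : Integrable id (P.map (fun ω => B t ω - B s ω)) := by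
      rw [hB.gaussIncr s t hs.le hst.le]
      apply Integrable.of_eval
      intro j
      exact ((measurePreserving_eval (fun _ : Fin ν =>
        gaussianReal 0 (Real.toNNReal (t - s))) j).integrable_comp_of_integrable
          ((memLp_id_gaussianReal 1).integrable le_rfl))
    exact this.comp_measurable hd
  have it := mart_int hB ht.le htT
  have is := mart_int hB hs.le hsT
  set A := ∫ ω, g (martBB T (fun r => B r ω) t) • martBB T (fun r => B r ω) t ∂P with hA
  have hJeq : ∀ ω, g (martBB T (fun r => B r ω) t) •
      (∫ u in s..t, ((T - u) / u) • clampBB T t (fun r => B r ω) u) =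
      ∫ u in Set.Ioc s t, g (martBB T (fun r => B r ω) t) • ((T - u) / u) •
        clampBB T t (fun r => B r ω) u := by
    intro ω
    rw [intervalIntegral.integral_of_le hst.le, integral_smul]
  have iJ : Integrable (fun ω => g (martBB T (fun r => B r ω) t) •
      (∫ u in s..t, ((T - u) / u) • clampBB T t (fun r => B r ω) u)) P := by
    simp_rw [hJeq]
    exact hfub.integral_prod_right
  have vJ : ∫ ω, g (martBB T (fun r => B r ω) t) •
      (∫ u in s..t, ((T - u) / u) • clampBB T t (fun r => B r ω) u) ∂P =
      ((t - s) * ((T - t) / t)) • A := by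
    simp_rw [hJeq]
    rw [← integral_integral_swap hfub]
    have : ∀ u ∈ Set.Ioc s t, ∫ ω, g (martBB T (fun r => B r ω) t) • ((T - u) / u) •
        clampBB T t (fun r => B r ω) u ∂P = ((T - t) / t) • A := by
      intro u hu
      have hu0 : 0 < u := hs.trans hu.1
      have hTu : T - u ≠ 0 := by linarith [hu.2]
      have e : ∀ ω, g (martBB T (fun r => B r ω) t) • ((T - u) / u) •
          clampBB T t (fun r => B r ω) u = ((T - u) / u) •
          (g (martBB T (fun r => B r ω) t) • martBB T (fun r => B r ω) u) := by
        intro ω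
        rw [clamp_eq T _ hu0.le hu.2, smul_comm]
      simp_rw [e]
      rw [integral_smul, mart_regress hB hu0.le hu.2 ht htT g hgm ⟨C, hgC⟩, smul_smul]
      congr 1
      field_simp
    rw [setIntegral_congr_fun measurableSet_Ioc this, setIntegral_const, smul_smul]
    simp [hst.le]
  have i1 := (gi _ it).fun_smul (T - t)
  have i2 := (gi _ is).fun_smul (T - s)
  have hD : ∫ ω, g (martBB T (fun r => B r ω) t) •
      ((T - t) • martBB T (fun r => B r ω) t - (T - s) • martBB T (fun r => B r ω) s
        - ∫ u in s..t, ((T - u) / u) • clampBB T t (fun r => B r ω) u) ∂P = 0 := by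
    have e : ∀ ω, g (martBB T (fun r => B r ω) t) •
      ((T - t) • martBB T (fun r => B r ω) t - (T - s) • martBB T (fun r => B r ω) s
        - ∫ u in s..t, ((T - u) / u) • clampBB T t (fun r => B r ω) u) =
        (T - t) • (g (martBB T (fun r => B r ω) t) • martBB T (fun r => B r ω) t) -
        (T - s) • (g (martBB T (fun r => B r ω) t) • martBB T (fun r => B r ω) s) -
        g (martBB T (fun r => B r ω) t) •
          ∫ u in s..t, ((T - u) / u) • clampBB T t (fun r => B r ω) u := by
      intro ω; module
    simp_rw [e]
    have i12 : Integrable (fun ω =>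
        (T - t) • (g (martBB T (fun r => B r ω) t) • martBB T (fun r => B r ω) t) -
        (T - s) • (g (martBB T (fun r => B r ω) t) • martBB T (fun r => B r ω) s)) P := i1.sub i2
    rw [integral_sub i12 iJ, integral_sub i1 i2, integral_smul, integral_smul, vJ,
      mart_regress hB hs.le hst.le ht htT g hgm ⟨C, hgC⟩, ← hA, smul_smul, ← sub_smul, ← sub_smul]
    have hTs : T - s ≠ 0 := by linarith
    rw [show T - t - (T - s) * (s * (T - t) / (t * (T - s))) - (t - s) * ((T - t) / t) = 0 by
      field_simp; ring, zero_smul]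
  have iD : Integrable (fun ω => g (martBB T (fun r => B r ω) t) •
      ((T - t) • martBB T (fun r => B r ω) t - (T - s) • martBB T (fun r => B r ω) s
        - ∫ u in s..t, ((T - u) / u) • clampBB T t (fun r => B r ω) u)) P := by
    refine ((i1.sub i2).sub iJ).congr (Filter.Eventually.of_forall fun ω => ?_)
    simp only [Pi.sub_apply]
    module
  simp_rw [hf, hK, smul_sub (g _) (_ - _ - _) (_ - _)]
  rw [integral_sub iD (gi _ hincr), hD, zero_sub, neg_neg]
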